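/- Fix an admissible test family and equip Conf^lf_∞(ℂ) with the sum metric d_sum. Then the fundamental group π₁(Conf^lf_∞(ℂ), Ñ) is uncountable. -/

import Mathlib

open scoped Topology
open Filter

noncomputable section

/-- A subset of `ℂ` is locally finite if it meets every compact set in a finite set. -/
def LocFin (A : Set ℂ) : Prop := ∀ K : Set ℂ, IsCompact K → (A ∩ K).Finite

/-- Membership in `C^lf_∞(ℂ)`: countably infinite, locally finite subsets of `ℂ`. -/
def IsClf (A : Set ℂ) : Prop := A.Countable ∧ A.Infinite ∧ LocFin A

/-- An admissible test family `(φ_j)_{j≥1}` (indexed here by `j : ℕ`, with `φ j`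
representing `φ_{j+1}`): for every `m ≥ 1` the subfamily of those `φ_j` supported in the
closed ball `K_m` is dense, for the sup norm, in the continuous compactly supported
functions with support in `K_m`. -/
structure TestFamily where
  φ : ℕ → ℂ → ℝ
  cont : ∀ j, Continuous (φ j)
  cpt : ∀ j, HasCompactSupport (φ j)
  dense : ∀ m : ℕ, 1 ≤ m → ∀ ψ : ℂ → ℝ, Continuous ψ → HasCompactSupport ψ →
      tsupport ψ ⊆ Metric.closedBall (0 : ℂ) (m : ℝ) →
      ∀ ε : ℝ, 0 < ε → ∃ j, tsupport (φ j) ⊆ Metric.closedBall (0 : ℂ) (m : ℝ) ∧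
        ∀ z, |φ j z - ψ z| ≤ ε

/-- `S_j(A) = ∑_{a∈A} φ_j(a)` (a sum with finitely many nonzero terms). -/
def Ssum (T : TestFamily) (j : ℕ) (A : Set ℂ) : ℝ := ∑ᶠ a ∈ A, T.φ j a

/-- The vague metric `d_V(A,B) = ∑_j 2^{-j} |S_j(A)-S_j(B)| / (1+|S_j(A)-S_j(B)|)`. -/
def dV (T : TestFamily) (A B : Set ℂ) : ℝ :=
  ∑' j : ℕ, (1 / 2 : ℝ) ^ (j + 1) *
    (|Ssum T j A - Ssum T j B| / (1 + |Ssum T j A - Ssum T j B|))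

/-- Ordered locally finite infinite configurations: injective sequences in `ℂ` with only
finitely many terms in each bounded disk. -/
def IsConf (x : ℕ → ℂ) : Prop :=
  Function.Injective x ∧ ∀ R : ℝ, 0 < R → {j : ℕ | ‖x j‖ ≤ R}.Finite

/-- The product metric `d_prod(x,y) = ∑_j 2^{-j} min(|x_j - y_j|, 1)`. -/
def dProd (x y : ℕ → ℂ) : ℝ :=
  ∑' j : ℕ, (1 / 2 : ℝ) ^ (j + 1) * min ‖x j - y j‖ 1

/-- The projection `P` to the underlying unordered configuration. -/
def Pmap (x : ℕ → ℂ) : Set ℂ := Set.range x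

/-- The sum metric `d_sum(x,y) = d_prod(x,y) + d_V(P(x),P(y))`. -/
def dSum (T : TestFamily) (x y : ℕ → ℂ) : ℝ :=
  dProd x y + dV T (Pmap x) (Pmap y)

/-- The space `Conf^lf_∞(ℂ)`; the test family is carried as a (phantom) parameter so that
the metric topology of `d_sum` can be installed as a typeclass instance. -/
structure ConfSp (T : TestFamily) where
  seq : ℕ → ℂ
  prop : IsConf seq

/-- The metric topology of `d_sum`: the topology generated by its open balls. -/
instance (T : TestFamily) : TopologicalSpace (ConfSp T) :=
  TopologicalSpace.generateFrom
    {s : Set (ConfSp T) | ∃ (x : ConfSp T) (ε : ℝ), 0 < ε ∧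
      s = {y : ConfSp T | dSum T x.seq y.seq < ε}}

/-- The basepoint `Ñ = (1, 2, 3, …)`. -/
def Ntilde (T : TestFamily) : ConfSp T where
  seq := fun j => (j : ℂ) + 1
  prop := by
    constructor
    · intro a b hab
      have h : ((a : ℂ) + 1) = ((b : ℂ) + 1) := hab
      have h2 : (a : ℂ) = (b : ℂ) := by linear_combination h
      exact_mod_cast h2
    · intro R hR
      apply Set.Finite.subset (Set.finite_Iic (Nat.floor R))
      intro j hj
      simp only [Set.mem_setOf_eq] at hj
      have habs : ‖(j : ℂ) + 1‖ = (j : ℝ) + 1 := by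
        rw [show ((j : ℂ) + 1) = (((j : ℝ) + 1 : ℝ) : ℂ) by push_cast; ring]
        rw [Complex.norm_real, Real.norm_eq_abs, abs_of_nonneg (by positivity)]
      rw [habs] at hj
      have : (j : ℝ) ≤ R := by linarith
      exact Set.mem_Iic.mpr (Nat.le_floor this)

/-!
The infinite torus `∏ₙ S¹` is a retract of `Conf^lf_∞(ℂ)`: rotate each pair `{2n + 1, 2n + 2}` of
points of `Ñ` about its midpoint by an independent angle, and recover the angles as the directions
between the two points of each pair. Although infinitely many points move at once, only finitely
many of them ever enter a given disk, which is what continuity for the vague metric requires. Hence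
`π₁(∏ₙ S¹) ≅ ℤ^ℕ` injects into `π₁(Conf^lf_∞(ℂ), Ñ)`.
-/

/-- The homomorphism `π₁(∏ Xᵢ, x) → ∏ π₁(Xᵢ, xᵢ)` induced by the projections, as an isomorphism.
It is encoded as the inverse of `Path.Homotopic.pi`, which preserves concatenation. -/
def fundamentalGroupPiMulEquiv {ι : Type*} {X : ι → Type*} [∀ i, TopologicalSpace (X i)]
    (x : ∀ i, X i) : FundamentalGroup (∀ i, X i) x ≃* ∀ i, FundamentalGroup (X i) (x i) :=
  MulEquiv.symm
    { toFun := Path.Homotopic.pi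
      invFun := fun p i => Path.Homotopic.proj i p
      left_inv := fun p => funext fun i => Path.Homotopic.proj_pi i p
      right_inv := Path.Homotopic.pi_proj
      map_mul' := fun p q => (Path.Homotopic.comp_pi_eq_pi_comp q p).symm }

theorem injective_fundamentalGroup_mapOfEq_of_leftInverse {X Y : Type*} [TopologicalSpace X]
    [TopologicalSpace Y] {f : C(X, Y)} {g : C(Y, X)} (hgf : Function.LeftInverse g f) {x : X}
    {y : Y} (hxy : f x = y) : Function.Injective (FundamentalGroup.mapOfEq f hxy) := by
  subst hxy
  refine Function.LeftInverse.injective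
    (g := fun p => (p.toPath.map g).cast (hgf x).symm (hgf x).symm) fun p => ?_
  beta_reduce
  rw [FundamentalGroup.mapOfEq_apply]
  obtain ⟨p⟩ := p
  exact congrArg Path.Homotopic.Quotient.mk (Path.ext (funext fun t => hgf (p t)))

theorem uncountable_pi {ι : Type*} [Infinite ι] {α : ι → Type*} [∀ i, Nontrivial (α i)] :
    Uncountable (∀ i, α i) := by
  classical
  choose a b hab using fun i => exists_pair_ne (α i)
  have hinj : Function.Injective fun s : Set ι => s.piecewise a b := by
    intro s t hst
    ext i
    have hi := congrFun hst i
    by_cases hs : i ∈ s <;> by_cases ht : i ∈ t <;> simp_all [Set.piecewise, eq_comm]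
  rw [← not_countable_iff]
  intro _
  obtain ⟨f, hf⟩ := hinj.countable.exists_injective_nat
  exact Function.cantor_injective _ ((Infinite.natEmbedding ι).injective.comp hf)

instance nontrivial_fundamentalGroup_circle (z : Circle) :
    Nontrivial (FundamentalGroup Circle z) := by
  obtain ⟨t, ht⟩ := Circle.isAddQuotientCoveringMap_exp.surjective z
  have : Nontrivial (AddSubgroup.zmultiples (2 * Real.pi)) := by
    rw [AddSubgroup.nontrivial_iff_ne_bot, Ne, AddSubgroup.zmultiples_eq_bot]
    exact Real.two_pi_pos.ne'
  exact (Circle.isAddQuotientCoveringMap_exp.fundamentalGroupEquiv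
    ⟨t, ht⟩).toEquiv.nontrivial

theorem uncountable_fundamentalGroup_pi {ι : Type*} [Infinite ι] {X : ι → Type*}
    [∀ i, TopologicalSpace (X i)] (x : ∀ i, X i) [∀ i, Nontrivial (FundamentalGroup (X i) (x i))] :
    Uncountable (FundamentalGroup (∀ i, X i) x) :=
  have := uncountable_pi (α := fun i => FundamentalGroup (X i) (x i))
  (fundamentalGroupPiMulEquiv x).symm.injective.uncountable

theorem summable_half_pow_mul {a : ℕ → ℝ} (h0 : ∀ j, 0 ≤ a j) (h1 : ∀ j, a j ≤ 1) :
    Summable fun j => (1 / 2 : ℝ) ^ (j + 1) * a j :=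
  .of_nonneg_of_le (fun j => mul_nonneg (by positivity) (h0 j))
    (fun j => mul_le_of_le_one_right (by positivity) (h1 j))
    ((summable_nat_add_iff 1).mpr summable_geometric_two)

theorem continuous_tsum_half_pow_mul {X : Type*} [TopologicalSpace X] {f : ℕ → X → ℝ}
    (hf : ∀ j, Continuous (f j)) (h : ∀ j x, |f j x| ≤ 1) :
    Continuous fun x => ∑' j, (1 / 2 : ℝ) ^ (j + 1) * f j x := by
  refine continuous_tsum (fun j => continuous_const.mul (hf j))
    ((summable_nat_add_iff 1).mpr summable_geometric_two) fun j x => ?_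
  rw [norm_mul, Real.norm_of_nonneg (by positivity)]
  exact mul_le_of_le_one_right (by positivity) (h j x)

theorem continuous_dProd (x : ℕ → ℂ) : Continuous (dProd x) := by
  refine continuous_tsum_half_pow_mul (f := fun j (y : ℕ → ℂ) => min ‖x j - y j‖ 1) (fun j => ?_)
    fun j y => ?_
  · fun_prop
  rw [abs_of_nonneg (by positivity)]
  exact min_le_right _ _

section

variable {T : TestFamily} {X : Type*} [TopologicalSpace X]

theorem continuous_dV {A : Set ℂ} {B : X → Set ℂ}
    (hB : ∀ j, Continuous fun t => Ssum T j (B t)) : Continuous fun t => dV T A (B t) := by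
  refine continuous_tsum_half_pow_mul
    (f := fun j t => |Ssum T j A - Ssum T j (B t)| / (1 + |Ssum T j A - Ssum T j (B t)|))
    (fun j => ?_) fun j t => ?_
  · have hj := hB j
    exact Continuous.div (by fun_prop) (by fun_prop) fun t => by positivity
  · rw [abs_of_nonneg (by positivity)]
    exact div_le_one_of_le₀ (le_add_of_nonneg_left zero_le_one) (by positivity)

variable {γ : X → ConfSp T}

theorem continuous_Ssum_Pmap (hcont : ∀ i, Continuous fun t => (γ t).seq i)
    (hfin : ∀ R : ℝ, LocallyFinite fun i => {t | ‖(γ t).seq i‖ ≤ R}) (j : ℕ) :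
    Continuous fun t => Ssum T j (Pmap (γ t).seq) := by
  obtain ⟨R, hR⟩ := (T.cpt j).isCompact.isBounded.subset_closedBall (0 : ℂ)
  simp only [Ssum, Pmap, fun t => finsum_mem_range (f := T.φ j) (γ t).prop.1]
  refine continuous_finsum (fun i => (T.cont j).comp (hcont i)) ((hfin R).subset fun i t ht => ?_)
  exact mem_closedBall_zero_iff.mp (hR (subset_tsupport _ ht))

theorem ConfSp.continuous_of_locallyFinite (hcont : ∀ i, Continuous fun t => (γ t).seq i)
    (hfin : ∀ R : ℝ, LocallyFinite fun i => {t | ‖(γ t).seq i‖ ≤ R}) : Continuous γ := by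
  refine continuous_generateFrom_iff.mpr ?_
  rintro _ ⟨x, ε, -, rfl⟩
  have hdist : Continuous fun t => dSum T x.seq (γ t).seq :=
    ((continuous_dProd x.seq).comp (continuous_pi hcont)).add
      (continuous_dV (continuous_Ssum_Pmap hcont hfin))
  exact isOpen_lt hdist continuous_const

end

theorem dSum_self (T : TestFamily) (x : ℕ → ℂ) : dSum T x x = 0 := by
  simp [dSum, dProd, dV]

theorem half_pow_mul_min_le_dSum (T : TestFamily) (x y : ℕ → ℂ) (i : ℕ) :
    (1 / 2 : ℝ) ^ (i + 1) * min ‖x i - y i‖ 1 ≤ dSum T x y := by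
  have hV : 0 ≤ dV T (Pmap x) (Pmap y) := tsum_nonneg fun j => by positivity
  have hsum := summable_half_pow_mul (a := fun j => min ‖x j - y j‖ 1)
    (fun j => by positivity) fun j => min_le_right _ _
  exact (hsum.le_tsum i fun j _ => by positivity).trans (le_add_of_nonneg_right hV)

namespace ConfSp

variable {T : TestFamily}

theorem dSum_ball_mem_nhds (x : ConfSp T) {ε : ℝ} (hε : 0 < ε) :
    {y : ConfSp T | dSum T x.seq y.seq < ε} ∈ 𝓝 x := by
  have hopen : IsOpen {y : ConfSp T | dSum T x.seq y.seq < ε} :=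
    TopologicalSpace.isOpen_generateFrom_of_mem ⟨x, ε, hε, rfl⟩
  exact hopen.mem_nhds ((dSum_self T x.seq).trans_lt hε)

theorem continuous_seq_apply (i : ℕ) : Continuous fun x : ConfSp T => x.seq i := by
  refine continuous_iff_continuousAt.mpr fun x => Metric.tendsto_nhds.mpr fun ε hε => ?_
  filter_upwards [x.dSum_ball_mem_nhds (ε := (1 / 2) ^ (i + 1) * min ε 1) (by positivity)]
    with y hy
  have hmin : min ‖x.seq i - y.seq i‖ 1 < min ε 1 :=
    lt_of_mul_lt_mul_left ((half_pow_mul_min_le_dSum T x.seq y.seq i).trans_lt hy) (by positivity)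
  rw [dist_comm, dist_eq_norm]
  exact lt_of_not_ge fun hle => hmin.not_ge (min_le_min_right 1 hle)

/-- The unit vector pointing from the `i`-th to the `j`-th point of a configuration, as a continuous
map to the circle; it records how these two points wind around each other. -/
def direction {i j : ℕ} (hij : i ≠ j) : C(ConfSp T, Circle) where
  toFun := fun x : ConfSp T => ⟨(x.seq j - x.seq i) / ‖x.seq j - x.seq i‖, by
    have hne : x.seq j - x.seq i ≠ 0 := sub_ne_zero.mpr (x.prop.1.ne hij.symm)
    simp [Submonoid.unitSphere, hne]⟩
  continuous_toFun := by
    have hsub : Continuous fun x : ConfSp T => x.seq j - x.seq i :=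
      (continuous_seq_apply j).sub (continuous_seq_apply i)
    refine (hsub.div (by fun_prop) fun x => ?_).subtype_mk _
    simpa [sub_eq_zero] using x.prop.1.ne hij.symm

end ConfSp

/-- The midpoint of the base points `2n + 1` and `2n + 2`, about which this pair is rotated. -/
def pairCenter (n : ℕ) : ℂ := 2 * n + 3 / 2

theorem norm_pairCenter (n : ℕ) : ‖pairCenter n‖ = 2 * n + 3 / 2 := by
  rw [← Complex.norm_of_nonneg (r := 2 * n + 3 / 2) (by positivity), pairCenter]
  push_cast
  rfl

theorem dist_pairCenter (m n : ℕ) : dist (pairCenter m) (pairCenter n) = 2 * dist m n := by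
  rw [pairCenter, pairCenter, dist_add_right, dist_eq_norm, ← mul_sub, norm_mul, Complex.norm_two,
    Nat.dist_eq]
  norm_cast

/-- The sequence whose terms `2n` and `2n + 1` are `pairCenter n - u n / 2` and
`pairCenter n + u n / 2`: the configuration `1, 2, 3, …` with its `n`-th pair of consecutive points
rotated by `u n`. -/
def antipodalPairs (u : ℕ → Circle) (i : ℕ) : ℂ :=
  pairCenter (i / 2) + ((i % 2 : ℕ) - 1 / 2) * u (i / 2)

theorem dist_antipodalPairs_pairCenter (u : ℕ → Circle) (i : ℕ) :
    dist (antipodalPairs u i) (pairCenter (i / 2)) = 1 / 2 := by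
  rw [antipodalPairs, dist_eq_norm, add_sub_cancel_left, norm_mul, Circle.norm_coe, mul_one]
  rcases Nat.mod_two_eq_zero_or_one i with hi | hi <;> rw [hi] <;> norm_num

theorem antipodalPairs_one (i : ℕ) : antipodalPairs 1 i = i + 1 := by
  have hi : (i : ℂ) = 2 * (i / 2 : ℕ) + (i % 2 : ℕ) := mod_cast (Nat.div_add_mod i 2).symm
  rw [antipodalPairs, pairCenter, Pi.one_apply, Circle.coe_one, hi]
  ring

theorem antipodalPairs_sub (u : ℕ → Circle) (n : ℕ) :
    antipodalPairs u (2 * n + 1) - antipodalPairs u (2 * n) = u n := by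
  have hdiv : (2 * n + 1) / 2 = n := by lia
  have hmod : (2 * n + 1) % 2 = 1 := by lia
  have hdiv' : 2 * n / 2 = n := by lia
  have hmod' : 2 * n % 2 = 0 := by lia
  rw [antipodalPairs, antipodalPairs, hdiv, hmod, hdiv', hmod']
  push_cast
  ring

theorem le_norm_antipodalPairs (u : ℕ → Circle) (i : ℕ) : (i : ℝ) ≤ ‖antipodalPairs u i‖ := by
  have htri := dist_triangle_left (pairCenter (i / 2)) 0 (antipodalPairs u i)
  rw [dist_antipodalPairs_pairCenter, dist_zero_right, dist_zero_right, norm_pairCenter] at htri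
  have hi : (i : ℝ) ≤ 2 * (i / 2 : ℕ) + 1 := mod_cast (by lia : i ≤ 2 * (i / 2) + 1)
  linarith

theorem injective_antipodalPairs (u : ℕ → Circle) : Function.Injective (antipodalPairs u) := by
  intro i j hij
  have hdiv : i / 2 = j / 2 := by
    have htri := dist_triangle_left (pairCenter (i / 2)) (pairCenter (j / 2)) (antipodalPairs u i)
    rw [dist_antipodalPairs_pairCenter, hij, dist_antipodalPairs_pairCenter, dist_pairCenter]
      at htri
    by_contra hne
    have : 1 ≤ dist (i / 2) (j / 2) := Nat.pairwise_one_le_dist hne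
    linarith
  have hmod : i % 2 = j % 2 := by
    rw [antipodalPairs, antipodalPairs, hdiv] at hij
    have hcoeff := mul_right_cancel₀ (Circle.coe_ne_zero _) (add_left_cancel hij)
    exact_mod_cast sub_left_injective hcoeff
  rw [← Nat.div_add_mod i 2, hdiv, hmod, Nat.div_add_mod]

theorem isConf_antipodalPairs (u : ℕ → Circle) : IsConf (antipodalPairs u) :=
  ⟨injective_antipodalPairs u, fun R _ => (Set.finite_Iic ⌊R⌋₊).subset fun i hi =>
    Nat.le_floor ((le_norm_antipodalPairs u i).trans hi)⟩

namespace ConfSp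

/-- The torus of all configurations `antipodalPairs u`, a retract of `ConfSp T`. -/
def torusEmbedding (T : TestFamily) : C(ℕ → Circle, ConfSp T) where
  toFun u := ⟨antipodalPairs u, isConf_antipodalPairs u⟩
  continuous_toFun := by
    refine continuous_of_locallyFinite (fun i => ?_) fun R u => ⟨Set.univ, univ_mem, ?_⟩
    · dsimp only [antipodalPairs]
      fun_prop
    · refine (Set.finite_Iic ⌊R⌋₊).subset fun i => ?_
      rintro ⟨v, hv, -⟩
      exact Nat.le_floor ((le_norm_antipodalPairs v i).trans hv)

theorem torusEmbedding_one (T : TestFamily) : torusEmbedding T 1 = Ntilde T :=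
  (mk.injEq ..).mpr (funext antipodalPairs_one)

/-- The retraction onto the torus, sending a configuration to the directions of its pairs of points
with indices `2n` and `2n + 1`. -/
def pairDirections (T : TestFamily) : C(ConfSp T, ℕ → Circle) :=
  .pi fun n => direction (show 2 * n ≠ 2 * n + 1 by lia)

theorem pairDirections_leftInverse_torusEmbedding (T : TestFamily) :
    Function.LeftInverse (pairDirections T) (torusEmbedding T) := by
  intro u
  ext n
  change (antipodalPairs u (2 * n + 1) - antipodalPairs u (2 * n)) /
    ‖antipodalPairs u (2 * n + 1) - antipodalPairs u (2 * n)‖ = _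
  rw [antipodalPairs_sub, Circle.norm_coe, Complex.ofReal_one, div_one]

end ConfSp

/-- The fundamental group `π₁(Conf^lf_∞(ℂ), Ñ)` is uncountable. -/
theorem fundamentalGroup_uncountable (T : TestFamily) :
    ¬ Countable (FundamentalGroup (ConfSp T) (Ntilde T)) := by
  have := uncountable_fundamentalGroup_pi (1 : ℕ → Circle)
  have hinj := injective_fundamentalGroup_mapOfEq_of_leftInverse
    (ConfSp.pairDirections_leftInverse_torusEmbedding T)
    (ConfSp.torusEmbedding_one T)
  exact not_countable_iff.mpr hinj.uncountable
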